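/- arXiv:2507.21316 — 2 statements merged into one kernel-verified Lean document; each statement's English description precedes it below -/
import Mathlib

section
/- Let 𝕆 be a discrete valuation ring with residue field 𝔽 and let A be an 𝕆-order. Then A is semiperfect if and only if every principal indecomposable A_𝔽-module (i.e., every indecomposable projective direct summand of the regular module A_𝔽) admits a lifting to an A-module that is projective over 𝕆. -/
/-- The Jacobson radical of a (possibly noncommutative) ring, as a two-sided ideal:
the intersection of all maximal left ideals. -/
def ringJacobson (R : Type*) [Ring R] : TwoSidedIdeal R :=
  TwoSidedIdeal.jacobson ⊥

/-- A ring `R` is *semiperfect* if `R / J(R)` is a semisimple (artinian) ring and every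
idempotent of `R / J(R)` can be lifted to an idempotent of `R`. -/
def IsSemiperfectRing (R : Type*) [Ring R] : Prop :=
  IsSemisimpleRing (ringJacobson R).ringCon.Quotient ∧
  ∀ x : (ringJacobson R).ringCon.Quotient, IsIdempotentElem x →
    ∃ e : R, IsIdempotentElem e ∧ (ringJacobson R).ringCon.mk' e = x

open TensorProduct

universe u v w

variable (𝕆 : Type u) [CommRing 𝕆] [IsDomain 𝕆] [IsDiscreteValuationRing 𝕆]
variable (A : Type v) [Ring A] [Algebra 𝕆 A] [Module.Finite 𝕆 A] [Module.Projective 𝕆 A]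

/-- The reduction `A_𝔽 = 𝔽 ⊗_𝕆 A` of the `𝕆`-order `A` modulo the maximal ideal of `𝕆`. -/
abbrev resAlgebra : Type _ := (IsLocalRing.ResidueField 𝕆) ⊗[𝕆] A

/-- The natural ring homomorphism `ψ : A → A_𝔽 = 𝔽 ⊗_𝕆 A`. -/
noncomputable def resMap : A →+* resAlgebra 𝕆 A :=
  (Algebra.TensorProduct.includeRight :
      A →ₐ[𝕆] (IsLocalRing.ResidueField 𝕆) ⊗[𝕆] A).toRingHom

/-- A *lifting* of an `A_𝔽`-module `P`: an `A`-module `M`, projective over `𝕆`,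
together with an identification of `𝔽 ⊗_𝕆 M` (realised as `M / 𝔪M` via a `ψ`-semilinear
surjection with kernel `𝔪M`) with `P` as `A_𝔽`-modules. -/
structure Lifting (P : Type w) [AddCommGroup P] [Module (resAlgebra 𝕆 A) P] where
  M : Type w
  [addCommGroupM : AddCommGroup M]
  [module𝕆M : Module 𝕆 M]
  [moduleAM : Module A M]
  [towerM : IsScalarTower 𝕆 A M]
  projective𝕆 : Module.Projective 𝕆 M
  f : M →ₛₗ[resMap 𝕆 A] P
  surjective : Function.Surjective f
  ker_eq : ∀ m : M, f m = 0 ↔ m ∈ (IsLocalRing.maximalIdeal 𝕆 • ⊤ : Submodule 𝕆 M)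


section helpers
open IsLocalRing

theorem aux_mem_smul {𝕆 : Type*} [CommRing 𝕆] {ϖ : 𝕆} [IsLocalRing 𝕆]
    (h : maximalIdeal 𝕆 = Ideal.span {ϖ}) {M : Type*} [AddCommGroup M] [Module 𝕆 M] (m : M) :
    m ∈ (maximalIdeal 𝕆 • ⊤ : Submodule 𝕆 M) ↔ ∃ y, m = ϖ • y := by
  rw [h, Submodule.ideal_span_singleton_smul, Submodule.mem_smul_pointwise_iff_exists]
  simp [eq_comm]

theorem aux_ker {𝕆 : Type u} [CommRing 𝕆] [IsDomain 𝕆] [IsDiscreteValuationRing 𝕆]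
    {A : Type v} [Ring A] [Algebra 𝕆 A] (a : A) :
    resMap 𝕆 A a = 0 ↔ a ∈ (maximalIdeal 𝕆 • ⊤ : Submodule 𝕆 A) := by
  have h := LinearMap.ker_tensorProductMk (R := 𝕆) (Q := A) (I := maximalIdeal 𝕆)
  rw [← h]
  rfl

theorem aux_surj {𝕆 : Type u} [CommRing 𝕆] [IsDomain 𝕆] [IsDiscreteValuationRing 𝕆]
    {A : Type v} [Ring A] [Algebra 𝕆 A] : Function.Surjective (resMap 𝕆 A) :=
  TensorProduct.mk_surjective 𝕆 A (ResidueField 𝕆) Ideal.Quotient.mk_surjective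

/-- Nakayama in elementary form. -/
theorem aux_nak {𝕆 : Type*} [CommRing 𝕆] [IsLocalRing 𝕆] {ϖ : 𝕆}
    (h : maximalIdeal 𝕆 = Ideal.span {ϖ}) {M : Type*} [AddCommGroup M] [Module 𝕆 M]
    [Module.Finite 𝕆 M] (N : Submodule 𝕆 M) (hN : ∀ x : M, ∃ n ∈ N, ∃ y, x = n + ϖ • y) :
    N = ⊤ := by
  rw [← top_le_iff]
  apply Submodule.le_of_le_smul_of_le_jacobson_bot (I := maximalIdeal 𝕆) Module.Finite.fg_top
  · rw [IsLocalRing.jacobson_eq_maximalIdeal _ bot_ne_top]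
  · intro x _
    obtain ⟨n, hn, y, rfl⟩ := hN x
    exact Submodule.add_mem_sup hn ((aux_mem_smul h _).2 ⟨y, rfl⟩)

theorem aux_ker_le {𝕆 : Type u} [CommRing 𝕆] [IsDomain 𝕆] [IsDiscreteValuationRing 𝕆]
    {A : Type v} [Ring A] [Algebra 𝕆 A] [Module.Finite 𝕆 A] (a : A) (ha : resMap 𝕆 A a = 0) :
    a ∈ ringJacobson A := by
  obtain ⟨ϖ, hϖ⟩ := IsDiscreteValuationRing.exists_irreducible 𝕆
  have h := hϖ.maximalIdeal_eq
  obtain ⟨b, rfl⟩ := (aux_mem_smul h _).1 ((aux_ker a).1 ha)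
  rw [ringJacobson, TwoSidedIdeal.mem_jacobson_iff]
  intro y
  have := aux_nak h (LinearMap.range (LinearMap.mulRight 𝕆 (1 + y * ϖ • b))) (by
    intro x
    refine ⟨_, ⟨x, rfl⟩, - (x * y * b), ?_⟩
    simp [mul_add, mul_assoc])
  obtain ⟨z, hz⟩ := LinearMap.range_eq_top.1 this 1
  refine ⟨z, ?_⟩
  have : z * y * ϖ • b + z - 1 = 0 := by
    rw [← hz]; simp [mul_add, mul_assoc, add_comm]
  rw [this]; exact zero_mem _

/-- A projective module that is finitely generated modulo `ϖ` is finitely generated. -/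
theorem aux_finite {𝕆 : Type u} [CommRing 𝕆] [IsDomain 𝕆] [IsDiscreteValuationRing 𝕆] {ϖ : 𝕆}
    (h : maximalIdeal 𝕆 = Ideal.span {ϖ}) {M : Type*} [AddCommGroup M] [Module 𝕆 M]
    [Module.Projective 𝕆 M] (N : Submodule 𝕆 M) (hfg : N.FG)
    (hN : ∀ x : M, ∃ n ∈ N, ∃ y, x = n + ϖ • y) : Module.Finite 𝕆 M := by
  classical
  obtain ⟨s, hs⟩ := Module.projective_def'.1 (inferInstance : Module.Projective 𝕆 M)
  obtain ⟨T, rfl⟩ := hfg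
  let S : Finset M := T.biUnion fun t => (s t).support
  have key : ∀ i ∉ S, ∀ x, s x i = 0 := by
    intro i hi x
    let φ : M →ₗ[𝕆] 𝕆 := (Finsupp.lapply i).comp s
    have hφ : ∀ n ∈ Submodule.span 𝕆 (T : Set M), φ n = 0 := by
      intro n hn
      have : Submodule.span 𝕆 (T : Set M) ≤ LinearMap.ker φ := by
        rw [Submodule.span_le]
        intro t ht
        by_contra h0
        exact hi (Finset.mem_biUnion.2 ⟨t, ht, Finsupp.mem_support_iff.2 h0⟩)
      exact this hn
    have hr : LinearMap.range φ = ⊥ := by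
      apply Submodule.eq_bot_of_le_smul_of_le_jacobson_bot (maximalIdeal 𝕆) _
        (IsNoetherian.noetherian _)
      · rintro _ ⟨x, rfl⟩
        obtain ⟨n, hn, y, rfl⟩ := hN x
        rw [map_add, hφ n hn, zero_add, map_smul]
        exact Submodule.smul_mem_smul (h ▸ Ideal.mem_span_singleton_self ϖ) ⟨y, rfl⟩
      · rw [IsLocalRing.jacobson_eq_maximalIdeal _ bot_ne_top]
    have : φ x ∈ LinearMap.range φ := ⟨x, rfl⟩
    rw [hr] at this
    exact this
  have hinj : Function.Injective s := fun x y hxy => by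
    rw [← LinearMap.id_apply (R := 𝕆) x, ← LinearMap.id_apply (R := 𝕆) y, ← hs]
    simp [hxy]
  let r : M →ₗ[𝕆] (S → 𝕆) := (LinearMap.pi fun i : S => Finsupp.lapply (i : M)).comp s
  have hr : Function.Injective r := by
    intro x y hxy
    apply hinj
    ext i
    by_cases hi : i ∈ S
    · exact congrFun hxy ⟨i, hi⟩
    · rw [key i hi, key i hi]
  exact Module.Finite.of_injective r hr

theorem aux_bij {𝕆 : Type u} [CommRing 𝕆] [IsDomain 𝕆] [IsDiscreteValuationRing 𝕆]
    {A : Type v} [Ring A] [Algebra 𝕆 A] [Module.Finite 𝕆 A] {ϖ : 𝕆} (hϖ : Irreducible ϖ)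
    {M : Type*} [AddCommGroup M] [Module 𝕆 M] [Module A M] [IsScalarTower 𝕆 A M]
    [Module.Projective 𝕆 M] (F : M →ₛₗ[resMap 𝕆 A] resAlgebra 𝕆 A)
    (hF : ∀ m, F m = 0 → ∃ y, m = ϖ • y) (l : M) (hl : F l = 1) :
    Function.Bijective (fun a : A => a • l) := by
  have h := hϖ.maximalIdeal_eq
  let g : A →ₗ[𝕆] M := (LinearMap.toSpanSingleton A M l).restrictScalars 𝕆
  have hg : ∀ a, g a = a • l := fun a => rfl
  have hFg : ∀ a, F (a • l) = resMap 𝕆 A a := by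
    intro a; rw [map_smulₛₗ, hl, smul_eq_mul, mul_one]
  have htf : ∀ x : M, ϖ • x = 0 → x = 0 := fun x hx =>
    (smul_eq_zero.1 hx).resolve_left hϖ.ne_zero
  have hdec : ∀ x : M, ∃ n ∈ LinearMap.range g, ∃ y, x = n + ϖ • y := by
    intro x
    obtain ⟨a, ha⟩ := aux_surj (𝕆 := 𝕆) (A := A) (F x)
    obtain ⟨y, hy⟩ := hF (x - a • l) (by rw [map_sub, hFg, ha, sub_self])
    exact ⟨_, ⟨a, rfl⟩, y, by rw [hg, ← hy]; abel⟩
  constructor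
  · have : LinearMap.ker g = ⊥ := by
      apply Submodule.eq_bot_of_le_smul_of_le_jacobson_bot (maximalIdeal 𝕆) _
        (IsNoetherian.noetherian _)
      · intro a ha
        have ha : a • l = 0 := ha
        have h1 := hFg a
        rw [ha, map_zero] at h1
        obtain ⟨b, rfl⟩ := (aux_mem_smul h _).1 ((aux_ker a).1 h1.symm)
        refine Submodule.smul_mem_smul (h ▸ Ideal.mem_span_singleton_self ϖ) ?_
        rw [smul_assoc] at ha
        exact htf _ ha
      · rw [IsLocalRing.jacobson_eq_maximalIdeal _ bot_ne_top]
    exact LinearMap.ker_eq_bot.1 this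
  · have hfin : Module.Finite 𝕆 M := aux_finite h (LinearMap.range g)
      (by rw [LinearMap.range_eq_map]; exact Module.Finite.fg_top.map g) hdec
    exact LinearMap.range_eq_top.1 (aux_nak h _ hdec)

/-- Sum of two semilinear maps on a product. -/
noncomputable def auxSum {𝕆 : Type u} [CommRing 𝕆] [IsDomain 𝕆] [IsDiscreteValuationRing 𝕆]
    {A : Type v} [Ring A] [Algebra 𝕆 A] {I J : Ideal (resAlgebra 𝕆 A)}
    {M N : Type*} [AddCommGroup M] [Module A M] [AddCommGroup N] [Module A N]
    (f : M →ₛₗ[resMap 𝕆 A] I) (g : N →ₛₗ[resMap 𝕆 A] J) :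
    (M × N) →ₛₗ[resMap 𝕆 A] resAlgebra 𝕆 A where
  toFun p := f p.1 + g p.2
  map_add' p q := by simp only [Prod.fst_add, Prod.snd_add, map_add, Submodule.coe_add]; abel
  map_smul' a p := by
    simp only [Prod.smul_fst, Prod.smul_snd, map_smulₛₗ, Submodule.coe_smul, smul_add]

theorem auxSum_ker {𝕆 : Type u} [CommRing 𝕆] [IsDomain 𝕆] [IsDiscreteValuationRing 𝕆]
    {A : Type v} [Ring A] [Algebra 𝕆 A] {I J : Ideal (resAlgebra 𝕆 A)} (hIJ : Disjoint I J)
    {ϖ : 𝕆} (h : maximalIdeal 𝕆 = Ideal.span {ϖ})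
    {M N : Type*} [AddCommGroup M] [Module A M] [AddCommGroup N] [Module A N]
    [Module 𝕆 M] [Module 𝕆 N]
    (f : M →ₛₗ[resMap 𝕆 A] I) (g : N →ₛₗ[resMap 𝕆 A] J)
    (hf : ∀ m : M, f m = 0 ↔ m ∈ (maximalIdeal 𝕆 • ⊤ : Submodule 𝕆 M))
    (hg : ∀ m : N, g m = 0 ↔ m ∈ (maximalIdeal 𝕆 • ⊤ : Submodule 𝕆 N)) (p : M × N) :
    auxSum f g p = 0 ↔ ∃ y, p = ϖ • y := by
  change (f p.1 : resAlgebra 𝕆 A) + g p.2 = 0 ↔ _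
  constructor
  · intro h0
    have h1 : (f p.1 : resAlgebra 𝕆 A) = 0 := by
      refine Submodule.disjoint_def.1 hIJ _ (f p.1).2 ?_
      rw [eq_neg_of_add_eq_zero_left h0]
      exact J.neg_mem (g p.2).2
    have h2 : (g p.2 : resAlgebra 𝕆 A) = 0 := by rwa [h1, zero_add] at h0
    obtain ⟨y, hy⟩ := (aux_mem_smul h _).1 ((hf _).1 (Subtype.ext h1))
    obtain ⟨z, hz⟩ := (aux_mem_smul h _).1 ((hg _).1 (Subtype.ext h2))
    exact ⟨(y, z), Prod.ext hy hz⟩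
  · rintro ⟨⟨y, z⟩, rfl⟩
    have h1 := (hf _).2 ((aux_mem_smul h (ϖ • y)).2 ⟨y, rfl⟩)
    have h2 := (hg _).2 ((aux_mem_smul h (ϖ • z)).2 ⟨z, rfl⟩)
    simp [h1, h2]

theorem aux_combine {𝕆 : Type u} [CommRing 𝕆] [IsDomain 𝕆] [IsDiscreteValuationRing 𝕆]
    {A : Type v} [Ring A] [Algebra 𝕆 A] {I J : Ideal (resAlgebra 𝕆 A)} (hIJ : Disjoint I J)
    (K : Ideal (resAlgebra 𝕆 A)) (hK : I ⊔ J = K)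
    (h1 : Nonempty (Lifting 𝕆 A I)) (h2 : Nonempty (Lifting 𝕆 A J)) :
    Nonempty (Lifting 𝕆 A K) := by
  obtain ⟨ϖ, hϖ⟩ := IsDiscreteValuationRing.exists_irreducible 𝕆
  have h := hϖ.maximalIdeal_eq
  obtain ⟨@⟨M, _, _, _, _, pM, f, sf, kf⟩⟩ := h1
  obtain ⟨@⟨N, _, _, _, _, pN, g, sg, kg⟩⟩ := h2
  have hmem : ∀ p, auxSum f g p ∈ K := fun p => by
    rw [← hK]
    exact Submodule.add_mem_sup (f p.1).2 (g p.2).2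
  refine ⟨{ M := M × N
            projective𝕆 := inferInstance
            f := { toFun := fun p => ⟨auxSum f g p, hmem p⟩
                   map_add' := fun p q => Subtype.ext (map_add (auxSum f g) p q)
                   map_smul' := fun a p => Subtype.ext (map_smulₛₗ (auxSum f g) a p) }
            surjective := ?_
            ker_eq := ?_ }⟩
  · rintro ⟨x, hx⟩
    rw [← hK] at hx
    obtain ⟨y, hy, z, hz, rfl⟩ := Submodule.mem_sup.1 hx
    obtain ⟨m, hm⟩ := sf ⟨y, hy⟩
    obtain ⟨n, hn⟩ := sg ⟨z, hz⟩
    refine ⟨(m, n), Subtype.ext ?_⟩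
    change (f m : resAlgebra 𝕆 A) + g n = _
    rw [hm, hn]
  · intro m
    rw [aux_mem_smul h, ← auxSum_ker hIJ h f g kf kg]
    exact Subtype.ext_iff

theorem aux_idem {𝕆 : Type u} [CommRing 𝕆] [IsDomain 𝕆] [IsDiscreteValuationRing 𝕆]
    {A : Type v} [Ring A] [Algebra 𝕆 A] [Module.Finite 𝕆 A] {I J : Ideal (resAlgebra 𝕆 A)}
    (hIJ : Disjoint I J)
    (h1 : Nonempty (Lifting 𝕆 A I)) (h2 : Nonempty (Lifting 𝕆 A J))
    (x : resAlgebra 𝕆 A) (hx : x ∈ I) (hx' : 1 - x ∈ J) :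
    ∃ e : A, IsIdempotentElem e ∧ resMap 𝕆 A e = x := by
  obtain ⟨ϖ, hϖ⟩ := IsDiscreteValuationRing.exists_irreducible 𝕆
  have h := hϖ.maximalIdeal_eq
  obtain ⟨@⟨M, _, _, _, _, pM, f, sf, kf⟩⟩ := h1
  obtain ⟨@⟨N, _, _, _, _, pN, g, sg, kg⟩⟩ := h2
  obtain ⟨m, hm⟩ := sf ⟨x, hx⟩
  obtain ⟨n, hn⟩ := sg ⟨1 - x, hx'⟩
  have hF : auxSum f g (m, n) = 1 := by
    change (f m : resAlgebra 𝕆 A) + g n = _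
    rw [hm, hn]; simp
  obtain ⟨inj, surj⟩ := aux_bij hϖ (auxSum f g) (fun p => (auxSum_ker hIJ h f g kf kg p).1) _ hF
  obtain ⟨e, he⟩ := surj (m, 0)
  have he : e • (m, n) = (m, (0 : N)) := he
  have hem : e • m = m := congrArg Prod.fst he
  refine ⟨e, inj ?_, ?_⟩
  · change (e * e) • (m, n) = e • (m, n)
    rw [mul_smul, he, Prod.smul_mk, hem, smul_zero]
  · have h3 := map_smulₛₗ (auxSum f g) e (m, n)
    rw [he, hF, smul_eq_mul, mul_one] at h3
    rw [← h3]
    change (f m : resAlgebra 𝕆 A) + g 0 = _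
    rw [hm]; simp

theorem aux_all {𝕆 : Type u} [CommRing 𝕆] [IsDomain 𝕆] [IsDiscreteValuationRing 𝕆]
    {A : Type v} [Ring A] [Algebra 𝕆 A] [IsArtinianRing (resAlgebra 𝕆 A)]
    (H : ∀ I : Ideal (resAlgebra 𝕆 A),
        (∃ J : Ideal (resAlgebra 𝕆 A), IsCompl I J) →
        Nontrivial I →
        (∀ N N' : Submodule (resAlgebra 𝕆 A) I, IsCompl N N' → N = ⊥ ∨ N' = ⊥) →
        Nonempty (Lifting 𝕆 A I)) (I : Ideal (resAlgebra 𝕆 A)) :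
    (∃ J : Ideal (resAlgebra 𝕆 A), IsCompl I J) → Nonempty (Lifting 𝕆 A I) := by
  induction I using WellFoundedLT.induction with
  | ind I ih =>
  intro hI
  by_cases hb : I = ⊥
  · subst hb
    refine ⟨{ M := PUnit
              projective𝕆 := inferInstance
              f := 0
              surjective := fun x => ⟨0, Subsingleton.elim _ _⟩
              ker_eq := fun m => ?_ }⟩
    have : m = 0 := Subsingleton.elim _ _
    subst this
    exact ⟨fun _ => Submodule.zero_mem _, fun _ => rfl⟩
  by_cases hd : ∀ N N' : Submodule (resAlgebra 𝕆 A) I, IsCompl N N' → N = ⊥ ∨ N' = ⊥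
  · exact H I hI (Submodule.nontrivial_iff_ne_bot.2 hb) hd
  push Not at hd
  obtain ⟨N, N', hc, hN, hN'⟩ := hd
  obtain ⟨J, hJ⟩ := hI
  have key : ∀ N N' : Submodule (resAlgebra 𝕆 A) I, IsCompl N N' → N' ≠ ⊥ →
      Nonempty (Lifting 𝕆 A (N.map I.subtype : Ideal _)) := by
    intro N N' hc hN'
    have hdis : Disjoint (N.map I.subtype) (N'.map I.subtype) :=
      (Submodule.disjoint_map (f := I.subtype) I.injective_subtype hc.disjoint)
    have hsup : N.map I.subtype ⊔ N'.map I.subtype = I := by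
      rw [← Submodule.map_sup, hc.sup_eq_top, Submodule.map_subtype_top]
    apply ih
    · refine lt_of_le_of_ne (Submodule.map_subtype_le _ _) fun heq => hN' ?_
      have : N = ⊤ := by
        apply Submodule.map_injective_of_injective I.injective_subtype
        rw [heq, Submodule.map_subtype_top]
      subst this
      simpa using hc.inf_eq_bot
    · refine ⟨N'.map I.subtype ⊔ J, ?_, ?_⟩
      · apply hdis.disjoint_sup_right_of_disjoint_sup_left
        rw [hsup]; exact hJ.disjoint
      · rw [codisjoint_iff, ← sup_assoc, hsup]; exact hJ.sup_eq_top
  refine aux_combine (Submodule.disjoint_map (f := I.subtype) I.injective_subtype hc.disjoint) I ?_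
    (key N N' hc hN') (key N' N hc.symm hN)
  rw [← Submodule.map_sup, hc.sup_eq_top, Submodule.map_subtype_top]

theorem aux_mk {A : Type v} [Ring A] (a : A) :
    (ringJacobson A).ringCon.mk' a = 0 ↔ a ∈ ringJacobson A := by
  rw [← TwoSidedIdeal.mem_ker, TwoSidedIdeal.ker_ringCon_mk']

theorem aux_mem_jac {A : Type v} [Ring A] (a : A) :
    a ∈ ringJacobson A ↔ a ∈ Ring.jacobson A := by
  rw [← TwoSidedIdeal.mem_asIdeal, ringJacobson, TwoSidedIdeal.asIdeal_jacobson,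
    ← Ideal.jacobson_bot]
  simp

theorem aux_unit {A : Type v} [Ring A] (a : A) (ha : a - 1 ∈ ringJacobson A) : IsUnit a := by
  have key : ∀ b : A, b - 1 ∈ ringJacobson A → ∃ z, z * b = 1 := by
    intro b hb
    rw [ringJacobson, TwoSidedIdeal.mem_jacobson_iff] at hb
    obtain ⟨z, hz⟩ := hb 1
    have hz : z * 1 * (b - 1) + z - 1 = 0 := by simpa using hz
    refine ⟨z, ?_⟩
    rw [mul_one, mul_sub, mul_one, sub_add_cancel] at hz
    exact sub_eq_zero.1 hz
  obtain ⟨z, hz⟩ := key a ha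
  obtain ⟨w, hw⟩ := key z (by
    have : z - 1 = - (z * (a - 1)) := by rw [mul_sub, hz]; simp
    rw [this]
    exact neg_mem ((ringJacobson A).mul_mem_left _ _ ha))
  have : w = a := by
    calc w = w * (z * a) := by rw [hz, mul_one]
      _ = a := by rw [← mul_assoc, hw, one_mul]
  exact ⟨⟨a, z, this ▸ hw, hz⟩, rfl⟩

theorem aux_backward {𝕆 : Type u} [CommRing 𝕆] [IsDomain 𝕆] [IsDiscreteValuationRing 𝕆]
    {A : Type v} [Ring A] [Algebra 𝕆 A] [Module.Finite 𝕆 A]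
    (H : ∀ I : Ideal (resAlgebra 𝕆 A),
        (∃ J : Ideal (resAlgebra 𝕆 A), IsCompl I J) →
        Nontrivial I →
        (∀ N N' : Submodule (resAlgebra 𝕆 A) I, IsCompl N N' → N = ⊥ ∨ N' = ⊥) →
        Nonempty (Lifting 𝕆 A I)) : IsSemiperfectRing A := by
  have art : IsArtinianRing (resAlgebra 𝕆 A) := IsArtinianRing.of_finite (ResidueField 𝕆) _
  let ψ := resMap 𝕆 A
  have hψ : Function.Surjective ψ := aux_surj
  let mk := (ringJacobson A).ringCon.mk'
  have hmk : Function.Surjective mk := RingCon.mk'_surjective _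
  let ρ : resAlgebra 𝕆 A →+* (ringJacobson A).ringCon.Quotient :=
    RingHom.liftOfSurjective ψ hψ ⟨mk, fun a ha => (aux_mk a).2 (aux_ker_le a ha)⟩
  have hρ : ∀ a, ρ (ψ a) = mk a := fun a => by
    apply RingHom.liftOfRightInverse_comp_apply
  have hρs : Function.Surjective ρ := fun x => by
    obtain ⟨a, rfl⟩ := hmk x
    exact ⟨_, hρ a⟩
  refine ⟨?_, ?_⟩
  · have : IsArtinianRing (ringJacobson A).ringCon.Quotient := hρs.isArtinianRing
    rw [IsArtinianRing.isSemisimpleRing_iff_jacobson]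
    have : RingHomSurjective mk := ⟨hmk⟩
    have h1 := Ring.map_jacobson_of_ker_le (f := mk)
      (fun a ha => (aux_mem_jac a).1 ((aux_mk a).1 ha))
    rw [← h1, eq_bot_iff]
    rintro _ ⟨a, ha, rfl⟩
    exact (aux_mk a).2 ((aux_mem_jac a).2 ha)
  · intro x hx
    have hnil : ∀ y ∈ RingHom.ker ρ, IsNilpotent y := by
      intro y hy
      obtain ⟨a, rfl⟩ := hψ y
      rw [RingHom.mem_ker, hρ] at hy
      have ha := (aux_mem_jac a).1 ((aux_mk a).1 hy)
      have : RingHomSurjective ψ := ⟨hψ⟩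
      have hb : ψ a ∈ Ring.jacobson (resAlgebra 𝕆 A) := Ring.le_comap_jacobson ψ ha
      obtain ⟨n, hn⟩ := IsSemiprimaryRing.isNilpotent (R := resAlgebra 𝕆 A)
      refine ⟨n, ?_⟩
      have := Ideal.pow_mem_pow hb n
      rw [hn] at this
      exact this
    obtain ⟨ε, hε, rfl⟩ := exists_isIdempotentElem_eq_of_ker_isNilpotent ρ hnil x (hρs x) hx
    have hdis : IsCompl (Ideal.span {ε}) (Ideal.span {1 - ε}) := by
      constructor
      · rw [Submodule.disjoint_def]
        intro y h1 h2
        obtain ⟨b, rfl⟩ := Ideal.mem_span_singleton'.1 h1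
        obtain ⟨c, hc⟩ := Ideal.mem_span_singleton'.1 h2
        have := congrArg (· * ε) hc
        simp only [mul_assoc, sub_mul, hε.eq, one_mul, sub_self, mul_zero] at this
        exact this.symm
      · rw [codisjoint_iff, Ideal.eq_top_iff_one]
        have : ε + (1 - ε) = (1 : resAlgebra 𝕆 A) := by abel
        refine (congrArg (· ∈ _) this).mp ?_
        exact Submodule.add_mem_sup (Ideal.mem_span_singleton_self _)
          (Ideal.mem_span_singleton_self _)
    obtain ⟨e, he, h2⟩ := aux_idem hdis.disjoint (aux_all H _ ⟨_, hdis⟩)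
      (aux_all H _ ⟨_, hdis.symm⟩) ε (Ideal.mem_span_singleton_self _)
      (Ideal.mem_span_singleton_self _)
    exact ⟨e, he, by rw [← h2]; exact (hρ e).symm⟩

theorem aux_forward {𝕆 : Type u} [CommRing 𝕆] [IsDomain 𝕆] [IsDiscreteValuationRing 𝕆]
    {A : Type v} [Ring A] [Algebra 𝕆 A] [Module.Finite 𝕆 A] [Module.Projective 𝕆 A]
    (H : IsSemiperfectRing A) (I J : Ideal (resAlgebra 𝕆 A)) (hIJ : IsCompl I J) :
    Nonempty (Lifting 𝕆 A I) := by
  obtain ⟨ϖ, hϖ⟩ := IsDiscreteValuationRing.exists_irreducible 𝕆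
  have h := hϖ.maximalIdeal_eq
  -- the idempotent generator of `I`
  obtain ⟨ε, hεI, δ, hδ, h1⟩ : ∃ ε ∈ I, ∃ δ ∈ J, ε + δ = 1 :=
    Submodule.mem_sup.1 (hIJ.sup_eq_top ▸ Submodule.mem_top)
  have hIε : ∀ y ∈ I, y * ε = y := by
    intro y hy
    have h2 : y - y * ε = y * δ := by
      rw [eq_sub_of_add_eq' h1, mul_sub, mul_one]
    have h3 := Submodule.disjoint_def.1 hIJ.disjoint (y - y * ε)
      (I.sub_mem hy (I.mul_mem_left _ hεI)) (h2 ▸ J.mul_mem_left _ hδ)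
    exact (sub_eq_zero.1 h3).symm
  have hε : ε * ε = ε := hIε ε hεI
  obtain ⟨a, ha⟩ := aux_surj (𝕆 := 𝕆) (A := A) ε
  let mk := (ringJacobson A).ringCon.mk'
  obtain ⟨e, he, hea⟩ := H.2 (mk a) (by
    have : mk (a * a - a) = 0 := (aux_mk _).2 (aux_ker_le (𝕆 := 𝕆) _ (by simp [ha, hε]))
    rw [map_sub, map_mul] at this
    exact sub_eq_zero.1 this)
  have hea : mk e = mk a := hea
  have he : e * e = e := he
  have hU : IsUnit (a * e + (1 - a) * (1 - e)) := by
    apply aux_unit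
    rw [← aux_mk]
    change mk _ = 0
    simp only [map_sub, map_add, map_mul, map_one, ← hea]
    have : mk e * mk e = mk e := by rw [← map_mul, he]
    simp [mul_sub, sub_mul, this]
  obtain ⟨u, hu⟩ := hU.map (resMap 𝕆 A)
  set φ := resMap 𝕆 A e with hφ
  have hφφ : φ * φ = φ := by rw [hφ, ← map_mul, he]
  have hu : (u : resAlgebra 𝕆 A) = ε * φ + (1 - ε) * (1 - φ) := by
    rw [hu]; simp [ha, ← hφ]
  have hcomm : ε * u = u * φ := by
    rw [hu]
    simp only [mul_add, add_mul, mul_sub, sub_mul, mul_one, one_mul, ← mul_assoc, hε]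
    simp only [mul_assoc, hφφ]
    abel
  have hcomm' : φ * (↑u⁻¹ : resAlgebra 𝕆 A) = ↑u⁻¹ * ε := by
    rw [Units.mul_inv_eq_iff_eq_mul, mul_assoc, hcomm, Units.inv_mul_cancel_left]
  -- the lifting
  let P : Submodule A A := Submodule.span A {e}
  have hP : ∀ m ∈ P, m * e = m := by
    intro m hm
    obtain ⟨b, rfl⟩ := Submodule.mem_span_singleton.1 hm
    simp [mul_assoc, he]
  have hPm : ∀ b : A, b * e ∈ P := fun b => Submodule.mem_span_singleton.2 ⟨b, rfl⟩
  have hproj : Module.Projective 𝕆 P := by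
    let i : P →ₗ[𝕆] A := P.subtype.restrictScalars 𝕆
    let s : A →ₗ[𝕆] P :=
      { toFun := fun b => ⟨b * e, hPm b⟩
        map_add' := fun b c => Subtype.ext (add_mul b c e)
        map_smul' := fun r b => Subtype.ext (smul_mul_assoc r b e) }
    exact Module.Projective.of_split i s (LinearMap.ext fun p => Subtype.ext (hP p p.2))
  have hmem : ∀ m ∈ P, resMap 𝕆 A m * (↑u⁻¹ : resAlgebra 𝕆 A) ∈ I := by
    intro m hm
    rw [← hP m hm, map_mul, ← hφ, mul_assoc, hcomm', ← mul_assoc]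
    exact I.mul_mem_left _ hεI
  have : Module.Projective 𝕆 (ULift.{max u v} P) :=
    Module.Projective.of_equiv (ULift.moduleEquiv (R := 𝕆) (M := P)).symm
  refine ⟨{ M := ULift.{max u v} P
            projective𝕆 := this
            f := { toFun := fun m => ⟨resMap 𝕆 A m.down * (↑u⁻¹ : resAlgebra 𝕆 A),
                    hmem _ m.down.2⟩
                   map_add' := fun m n => Subtype.ext (by simp [add_mul])
                   map_smul' := fun b m => Subtype.ext (by simp [mul_assoc]) }
            surjective := ?_
            ker_eq := ?_ }⟩
  · rintro ⟨y, hy⟩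
    obtain ⟨b, hb⟩ := aux_surj (𝕆 := 𝕆) (A := A) (y * u)
    refine ⟨⟨⟨b * e, hPm b⟩⟩, Subtype.ext ?_⟩
    change resMap 𝕆 A (b * e) * (↑u⁻¹ : resAlgebra 𝕆 A) = y
    rw [map_mul, hb, ← hφ, mul_assoc, hcomm', mul_assoc, Units.mul_inv_cancel_left, hIε y hy]
  · intro m
    rw [aux_mem_smul h]
    have h2 : resMap 𝕆 A m.down * (↑u⁻¹ : resAlgebra 𝕆 A) = 0 ↔
        resMap 𝕆 A (m.down : A) = 0 := Units.mul_left_eq_zero _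
    refine Iff.trans Subtype.ext_iff (Iff.trans h2 ?_)
    rw [aux_ker, aux_mem_smul h]
    constructor
    · rintro ⟨y, hy⟩
      refine ⟨⟨⟨y * e, hPm y⟩⟩, ULift.ext _ _ (Subtype.ext ?_)⟩
      change (m.down : A) = ϖ • (y * e)
      rw [← smul_mul_assoc, ← hy, hP _ m.down.2]
    · rintro ⟨y, rfl⟩
      exact ⟨y.down, rfl⟩

end helpers

/-- **Proposition.** The `𝕆`-order `A` is semiperfect if and only if every principal
indecomposable `A_𝔽`-module (a nonzero indecomposable direct summand of the regular module
`A_𝔽`, i.e. a left ideal `I` admitting a complement and having no nontrivial direct sum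
decomposition) admits a lifting. -/
theorem isSemiperfectRing_iff_principal_indecomposables_lift :
    IsSemiperfectRing A ↔
      ∀ I : Ideal (resAlgebra 𝕆 A),
        (∃ J : Ideal (resAlgebra 𝕆 A), IsCompl I J) →
        Nontrivial I →
        (∀ N N' : Submodule (resAlgebra 𝕆 A) I, IsCompl N N' → N = ⊥ ∨ N' = ⊥) →
        Nonempty (Lifting 𝕆 A I) := by
  constructor
  · rintro H I ⟨J, hJ⟩ _ _
    exact aux_forward H I J hJ
  · exact aux_backward
end

section
/- Let 𝕆 be a discrete valuation ring with residue field 𝔽 and fraction field 𝕂, and let A be an 𝕆-order. If the 𝔽-algebra A_𝔽 = 𝔽 ⊗_𝕆 A is semisimple, then the 𝕂-algebra A_𝕂 = 𝕂 ⊗_𝕆 A is semisimple. -/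
open TensorProduct

universe u v w

variable (𝕆 : Type u) [CommRing 𝕆] [IsDomain 𝕆] [IsDiscreteValuationRing 𝕆]
variable (A : Type v) [Ring A] [Algebra 𝕆 A] [Module.Finite 𝕆 A] [Module.Projective 𝕆 A]

theorem mem_ringJacobson_of_forall_isNilpotent {R : Type*} [Ring R] (x : R)
    (hx : ∀ y, IsNilpotent (y * x)) : x ∈ Ring.jacobson R := by
  rw [← Ideal.jacobson_bot, Ideal.mem_jacobson_iff]
  intro y
  obtain ⟨u, hu⟩ := (hx y).isUnit_add_one
  refine ⟨(u⁻¹ : Rˣ), ?_⟩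
  have h1 : ((u⁻¹ : Rˣ) : R) * (y * x + 1) = 1 := by rw [← hu]; simp
  rw [Ideal.mem_bot, mul_assoc, ← h1]
  noncomm_ring

theorem isNilpotent_of_mem_ringJacobson {R : Type*} [Ring R] [IsArtinianRing R] (x : R)
    (hx : x ∈ Ring.jacobson R) : IsNilpotent x := by
  obtain ⟨n, hn⟩ := IsSemiprimaryRing.isNilpotent (R := R)
  refine ⟨n, ?_⟩
  have := Ideal.pow_mem_pow hx n
  rw [hn] at this
  simpa using this

/-- **Lemma.** If `A_𝔽 = 𝔽 ⊗_𝕆 A` is semisimple, then `A_𝕂 = 𝕂 ⊗_𝕆 A` is semisimple,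
where `𝕂` is the fraction field of `𝕆`. -/
theorem isSemisimpleRing_generic_of_isSemisimpleRing_residue
    (h : IsSemisimpleRing (resAlgebra 𝕆 A)) :
    IsSemisimpleRing ((FractionRing 𝕆) ⊗[𝕆] A) := by
  have hart : IsArtinianRing ((FractionRing 𝕆) ⊗[𝕆] A) :=
    IsArtinianRing.of_finite (FractionRing 𝕆) _
  rw [IsArtinianRing.isSemisimpleRing_iff_jacobson]
  let f : A →ₐ[𝕆] (FractionRing 𝕆) ⊗[𝕆] A := Algebra.TensorProduct.includeRight
  have hf : Function.Injective f :=
    Algebra.TensorProduct.includeRight_injective (IsFractionRing.injective 𝕆 (FractionRing 𝕆))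
  let J : Ideal ((FractionRing 𝕆) ⊗[𝕆] A) := Ring.jacobson _
  let N : Submodule 𝕆 A := (J.restrictScalars 𝕆).comap f.toLinearMap
  have memN : ∀ a, a ∈ N ↔ f a ∈ J := fun a => Iff.rfl
  have hsurj : Function.Surjective (resMap 𝕆 A) :=
    Algebra.TensorProduct.includeRight_surjective _ IsLocalRing.residue_surjective
  have hker : ∀ a ∈ N, a ∈ IsLocalRing.maximalIdeal 𝕆 • (⊤ : Submodule 𝕆 A) := by
    intro a ha
    have h0 : resMap 𝕆 A a = 0 := by
      have : resMap 𝕆 A a ∈ Ring.jacobson (resAlgebra 𝕆 A) := by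
        apply mem_ringJacobson_of_forall_isNilpotent
        intro y
        obtain ⟨b, rfl⟩ := hsurj y
        rw [← map_mul]
        apply IsNilpotent.map
        rw [← IsNilpotent.map_iff hf]
        apply isNilpotent_of_mem_ringJacobson
        rw [map_mul]
        exact J.mul_mem_left _ ha
      rw [IsSemisimpleRing.jacobson_eq_bot] at this
      simpa using this
    have h2 := TensorProduct.quotTensorEquivQuotSMul_mk_one_tmul (M := A)
      (IsLocalRing.maximalIdeal 𝕆) a
    have h3 : ((1 : 𝕆 ⧸ IsLocalRing.maximalIdeal 𝕆) ⊗ₜ[𝕆] a) = 0 := h0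
    rw [h3, map_zero] at h2
    exact (Submodule.Quotient.mk_eq_zero _).mp h2.symm
  obtain ⟨p, hp⟩ := IsDiscreteValuationRing.exists_irreducible 𝕆
  have hm := hp.maximalIdeal_eq
  have hNle : N ≤ IsLocalRing.maximalIdeal 𝕆 • N := by
    intro a ha
    have h1 := hker a ha
    rw [hm, Submodule.ideal_span_singleton_smul, Submodule.mem_smul_pointwise_iff_exists] at h1
    obtain ⟨b, -, rfl⟩ := h1
    refine Submodule.smul_mem_smul (by rw [hm]; exact Ideal.mem_span_singleton_self p) ?_
    rw [memN] at ha ⊢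
    have hp0 : algebraMap 𝕆 (FractionRing 𝕆) p ≠ 0 := by
      simpa using hp.ne_zero
    have h2 : f b = (algebraMap 𝕆 (FractionRing 𝕆) p)⁻¹ • f (p • b) := by
      rw [map_smul, ← algebraMap_smul (FractionRing 𝕆) p (f b), smul_smul,
        inv_mul_cancel₀ hp0, one_smul]
    rw [h2]
    exact Submodule.smul_of_tower_mem J _ ha
  have hN : N = ⊥ := by
    haveI : IsNoetherian 𝕆 A := inferInstance
    apply Submodule.eq_bot_of_le_smul_of_le_jacobson_bot _ N (IsNoetherian.noetherian N) hNle
    exact IsLocalRing.maximalIdeal_le_jacobson _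
  rw [eq_bot_iff]
  intro x hx
  obtain ⟨⟨a, s⟩, hs⟩ := IsLocalizedModule.surj (nonZeroDivisors 𝕆)
    (TensorProduct.mk 𝕆 (FractionRing 𝕆) A 1) x
  have hs' : (s : 𝕆) • x = f a := hs
  have ha : a ∈ N := by
    rw [memN, ← hs']
    exact Submodule.smul_of_tower_mem J _ hx
  rw [hN, Submodule.mem_bot] at ha
  rw [ha, map_zero, ← algebraMap_smul (FractionRing 𝕆)] at hs'
  have hs0 : algebraMap 𝕆 (FractionRing 𝕆) s ≠ 0 := by
    simpa using nonZeroDivisors.ne_zero s.2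
  exact (smul_eq_zero_iff_right hs0).mp hs'
end
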